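/- Let C₁ and C₂ be irreducible reduced divisors in P^{n-1} that are Cremona equivalent, and let S₁, S₂ ⊂ Pⁿ be cones over C₁ and C₂ respectively (embedding P^{n-1} as a hyperplane of Pⁿ and taking vertices outside it). Then S₁ is Cremona equivalent to S₂. -/

import Mathlib

/-!
Concrete framework: projective space over a field `k` as `Projectivization`,
hypersurfaces as zero loci of homogeneous polynomials, rational maps given by
tuples of homogeneous polynomials, birational maps between (closed) subvarieties,
and Cremona equivalence of divisors.
-/

open MvPolynomial

/-- Projective `n`-space over `k`, as the projectivization of `k^{n+1}`. -/
abbrev ProjSp (k : Type) [Field k] (n : ℕ) : Type :=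
  Projectivization k (Fin (n + 1) → k)

namespace ProjSp

variable (k : Type) [Field k]

/-- The zero locus in `ℙⁿ` of a (homogeneous) polynomial. -/
def zeros {n : ℕ} (f : MvPolynomial (Fin (n + 1)) k) : Set (ProjSp k n) :=
  {x | eval x.rep f = 0}

/-- `D ⊆ ℙⁿ` is an irreducible and reduced divisor (hypersurface): it is the zero
locus of an irreducible homogeneous polynomial of positive degree. -/
def IsIrredDivisor {n : ℕ} (D : Set (ProjSp k n)) : Prop :=
  ∃ (d : ℕ) (f : MvPolynomial (Fin (n + 1)) k),
    0 < d ∧ f.IsHomogeneous d ∧ Irreducible f ∧ D = zeros k f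

/-- A hyperplane in `ℙⁿ`: the zero locus of a nonzero linear form. -/
def IsHyperplane {n : ℕ} (H : Set (ProjSp k n)) : Prop :=
  ∃ f : MvPolynomial (Fin (n + 1)) k, f ≠ 0 ∧ f.IsHomogeneous 1 ∧ H = zeros k f

/-- The line through two points of `ℙⁿ` (the set of points whose representing line
lies in the plane spanned by the two points). -/
def lineThrough {n : ℕ} (p q : ProjSp k n) : Set (ProjSp k n) :=
  {z | z.submodule ≤ p.submodule ⊔ q.submodule}

/-- `S` is a cone with vertex `p`: `p ∈ S` and `S` is a union of lines through `p`.
For an irreducible divisor of degree `d` this is equivalent to `p` being a point of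
multiplicity `d` on `S`. -/
def IsConeWithVertex {n : ℕ} (S : Set (ProjSp k n)) (p : ProjSp k n) : Prop :=
  p ∈ S ∧ ∀ x ∈ S, lineThrough k p x ⊆ S

/-- The cone with vertex `p` over a set `A ⊆ ℙⁿ`: the union of the lines joining `p`
to the points of `A`. -/
def coneOver {n : ℕ} (p : ProjSp k n) (A : Set (ProjSp k n)) : Set (ProjSp k n) :=
  ⋃ a ∈ A, lineThrough k p a

/-- The data of a rational map `ℙⁿ ⇢ ℙᵐ`: an `(m+1)`-tuple of homogeneous polynomials
of a common degree in `n+1` variables. -/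
structure RatMap (n m : ℕ) where
  deg : ℕ
  comp : Fin (m + 1) → MvPolynomial (Fin (n + 1)) k
  homog : ∀ i, (comp i).IsHomogeneous deg

variable {k}

/-- The rational map is defined at `x` if not all of its components vanish at `x`. -/
def RatMap.Defined {n m : ℕ} (F : RatMap k n m) (x : ProjSp k n) : Prop :=
  (fun i => eval x.rep (F.comp i)) ≠ 0

open scoped Classical in
/-- The value of a rational map at a point (junk value where undefined). -/
noncomputable def RatMap.app {n m : ℕ} (F : RatMap k n m) (x : ProjSp k n) :
    ProjSp k m :=
  if h : (fun i => eval x.rep (F.comp i)) ≠ 0 then Projectivization.mk k _ h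
  else Classical.arbitrary _

variable (k)

/-- `F` (with inverse `G`) restricts to a birational map from `A ⊆ ℙⁿ` onto `B ⊆ ℙᵐ`:
there are hypersurface complements, each meeting `A` resp. `B`, on which `F` and `G`
are defined, map `A` into `B` (resp. `B` into `A`) and are mutually inverse.  For
irreducible closed `A`, `B` this says exactly that `F` induces a birational map
`A ⇢ B`, i.e. that the strict transform (proper image) of `A` under `F` is `B`. -/
def IsBirationalOn {n m : ℕ} (F : RatMap k n m) (G : RatMap k m n)
    (A : Set (ProjSp k n)) (B : Set (ProjSp k m)) : Prop :=
  ∃ (u : MvPolynomial (Fin (n + 1)) k) (v : MvPolynomial (Fin (m + 1)) k)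
    (du dv : ℕ), u.IsHomogeneous du ∧ v.IsHomogeneous dv ∧
    ¬ A ⊆ zeros k u ∧ ¬ B ⊆ zeros k v ∧
    (∀ x ∈ A \ zeros k u,
      F.Defined x ∧ F.app x ∈ B ∧ G.Defined (F.app x) ∧ G.app (F.app x) = x) ∧
    (∀ y ∈ B \ zeros k v,
      G.Defined y ∧ G.app y ∈ A ∧ F.Defined (G.app y) ∧ F.app (G.app y) = y)

/-- `A ⊆ ℙⁿ` and `B ⊆ ℙᵐ` are birational (as abstract varieties). -/
def Birational {n m : ℕ} (A : Set (ProjSp k n)) (B : Set (ProjSp k m)) : Prop :=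
  ∃ (F : RatMap k n m) (G : RatMap k m n), IsBirationalOn k F G A B

/-- Two divisors `D, D' ⊆ ℙⁿ` are Cremona equivalent: there is a birational self-map
`Φ` of `ℙⁿ` (a Cremona transformation) whose strict transform of `D` is `D'`,
i.e. `Φ` restricts to a birational map from `D` onto `D'`. -/
def CremonaEquivalent {n : ℕ} (D D' : Set (ProjSp k n)) : Prop :=
  ∃ (F : RatMap k n n) (G : RatMap k n n),
    IsBirationalOn k F G Set.univ Set.univ ∧ IsBirationalOn k F G D D'

/-- `C` is a rational variety: it is birational to some projective space. -/
def IsRationalVariety {n : ℕ} (C : Set (ProjSp k n)) : Prop :=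
  ∃ m : ℕ, Birational k C (Set.univ : Set (ProjSp k m))

end ProjSp

open ProjSp

/-- The linear embedding `k^{m+1} → k^{m+2}` appending a last coordinate `0`. -/
def extendZeroLinear (k : Type) [Field k] (m : ℕ) :
    (Fin (m + 1) → k) →ₗ[k] (Fin (m + 2) → k) where
  toFun v := Fin.snoc v 0
  map_add' u v := by
    funext i
    refine Fin.lastCases ?_ (fun j => ?_) i <;> simp
  map_smul' c v := by
    funext i
    refine Fin.lastCases ?_ (fun j => ?_) i <;> simp

lemma extendZeroLinear_injective (k : Type) [Field k] (m : ℕ) :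
    Function.Injective (extendZeroLinear k m) := by
  intro u v h
  funext j
  have := congrFun h j.castSucc
  simpa [extendZeroLinear] using this

/-- The embedding of `ℙᵐ` into `ℙ^{m+1}` as the hyperplane `(x_{m+1} = 0)`. -/
noncomputable def hyperplaneEmbedding (k : Type) [Field k] (m : ℕ) :
    ProjSp k m → ProjSp k (m + 1) :=
  Projectivization.map (extendZeroLinear k m) (extendZeroLinear_injective k m)

/-!
In coordinates `z = (y + t a, t)`, the cone with vertex `[a : 1]` over `A` is `{[y] ∈ A}`, with the
vertex itself at `y = 0`. Choose linear forms `φ` on the source and `ψ` on the target. Off the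
hyperplane `φ = 0`, the space `ℙⁿ⁺¹` is `ℙⁿ × 𝔸¹` via `([y], t / φ y)`, so that `F × id` becomes
`(y, t) ↦ (φ(y) F(y), t ψ(F y))` and the same construction applied to `G` inverts it. It remains to
choose `φ` and `ψ` nonzero at finitely many points witnessing that `F` and `G` are generically
inverse to each other, which is possible as `k` is infinite.
-/

namespace ProjSp

variable {k : Type} [Field k] {n m : ℕ}

section Polynomials

variable {R : Type*} [CommRing R] {σ τ : Type*}

lemma eval_smul_of_isHomogeneous {d : ℕ} {f : MvPolynomial σ R} (hf : f.IsHomogeneous d)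
    (c : R) (v : σ → R) : eval (c • v) f = c ^ d * eval v f := by
  rw [eval_eq, eval_eq, Finset.mul_sum]
  refine Finset.sum_congr rfl fun s hs => ?_
  have hdeg : ∑ i ∈ s.support, s i = d := by
    simpa [Finsupp.weight_apply, Finsupp.sum] using hf (mem_support_iff.1 hs)
  simp only [Pi.smul_apply, smul_eq_mul, mul_pow, Finset.prod_mul_distrib,
    Finset.prod_pow_eq_pow_sum, hdeg]
  ring

lemma eval_bind₁ (L : σ → MvPolynomial τ R) (z : τ → R) (f : MvPolynomial σ R) :
    eval z (bind₁ L f) = eval (fun i => eval z (L i)) f := by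
  simp only [← coe_aeval_eq_eval, RingHom.coe_coe, aeval_bind₁]

variable [Fintype τ] [DecidableEq τ]

/-- A linear functional on `R^τ`, as a linear form. -/
noncomputable def linearForm (φ : (τ → R) →ₗ[R] R) : MvPolynomial τ R :=
  φ.toMvPolynomial (Pi.basisFun R τ) (Module.Basis.singleton Unit R) ()

lemma isHomogeneous_linearForm (φ : (τ → R) →ₗ[R] R) : (linearForm φ).IsHomogeneous 1 :=
  φ.toMvPolynomial_isHomogeneous _ _ _

lemma eval_linearForm (φ : (τ → R) →ₗ[R] R) (v : τ → R) : eval v (linearForm φ) = φ v :=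
  (φ.toMvPolynomial_eval_eq_apply (Pi.basisFun R τ) (Module.Basis.singleton Unit R) ()
    ((Pi.basisFun R τ).repr v)).trans (by simp)

/-- Substitution of a linear map: the polynomial function `f` is sent to `f ∘ L`. -/
noncomputable def linearPullback (L : (τ → R) →ₗ[R] (σ → R)) :
    MvPolynomial σ R →ₐ[R] MvPolynomial τ R :=
  bind₁ fun i => linearForm (LinearMap.proj i ∘ₗ L)

lemma eval_linearPullback (L : (τ → R) →ₗ[R] (σ → R)) (v : τ → R) (f : MvPolynomial σ R) :
    eval v (linearPullback L f) = eval (L v) f := by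
  simp only [linearPullback, eval_bind₁, eval_linearForm]
  rfl

lemma isHomogeneous_linearPullback (L : (τ → R) →ₗ[R] (σ → R)) {d : ℕ} {f : MvPolynomial σ R}
    (hf : f.IsHomogeneous d) : (linearPullback L f).IsHomogeneous d := by
  have hlin (i : σ) : (linearForm (LinearMap.proj i ∘ₗ L)).IsHomogeneous 1 :=
    isHomogeneous_linearForm _
  simpa only [linearPullback, bind₁, one_mul] using hf.aeval _ hlin

end Polynomials

lemma mk_mem_zeros_iff {d : ℕ} {f : MvPolynomial (Fin (n + 1)) k} (hf : f.IsHomogeneous d)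
    {v : Fin (n + 1) → k} (hv : v ≠ 0) :
    Projectivization.mk k v hv ∈ zeros k f ↔ eval v f = 0 := by
  obtain ⟨c, hc⟩ := Projectivization.exists_smul_eq_mk_rep k v hv
  rw [zeros, Set.mem_ofPred_eq, ← hc, Units.smul_def, eval_smul_of_isHomogeneous hf]
  simp

lemma mk_eq_of_mem_submodule {c : ProjSp k n} {y : Fin (n + 1) → k} (hy : y ≠ 0)
    (h : y ∈ c.submodule) : Projectivization.mk k y hy = c := by
  rw [c.submodule_eq, Submodule.mem_span_singleton] at h
  rw [← c.mk_rep, Projectivization.mk_eq_mk_iff']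
  exact h

lemma exists_linearForm_disjoint_zeros [Infinite k] {V : Set (ProjSp k n)} (hV : V.Finite) :
    ∃ φ : (Fin (n + 1) → k) →ₗ[k] k, Disjoint V (zeros k (linearForm φ)) := by
  have := hV.to_subtype
  obtain ⟨φ, hφ⟩ := Module.exists_dual_forall_apply_ne_zero (K := k)
    (fun x : V => x.1.rep) fun x => x.1.rep_nonzero
  exact ⟨φ, Set.disjoint_left.2 fun x hx hzero =>
    hφ ⟨x, hx⟩ (by simpa [zeros, eval_linearForm] using hzero)⟩

namespace RatMap

/-- The polynomial map between affine spaces that induces `F`. -/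
noncomputable def lift (F : RatMap k n m) (v : Fin (n + 1) → k) : Fin (m + 1) → k :=
  fun i => eval v (F.comp i)

lemma lift_smul (F : RatMap k n m) (c : k) (v : Fin (n + 1) → k) :
    F.lift (c • v) = c ^ F.deg • F.lift v := by
  ext i
  exact eval_smul_of_isHomogeneous (F.homog i) c v

lemma defined_iff {F : RatMap k n m} {x : ProjSp k n} : F.Defined x ↔ F.lift x.rep ≠ 0 :=
  Iff.rfl

lemma defined_mk_iff (F : RatMap k n m) {v : Fin (n + 1) → k} (hv : v ≠ 0) :
    F.Defined (Projectivization.mk k v hv) ↔ F.lift v ≠ 0 := by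
  obtain ⟨c, hc⟩ := Projectivization.exists_smul_eq_mk_rep k v hv
  rw [defined_iff, ← hc, Units.smul_def, lift_smul]
  simp

lemma app_of_defined (F : RatMap k n m) {x : ProjSp k n} (hx : F.Defined x) :
    F.app x = Projectivization.mk k (F.lift x.rep) (defined_iff.1 hx) :=
  dif_pos hx

lemma app_mk (F : RatMap k n m) {v : Fin (n + 1) → k} (hv : v ≠ 0) (h : F.lift v ≠ 0) :
    F.app (Projectivization.mk k v hv) = Projectivization.mk k (F.lift v) h := by
  rw [F.app_of_defined ((F.defined_mk_iff hv).2 h), Projectivization.mk_eq_mk_iff']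
  obtain ⟨c, hc⟩ := Projectivization.exists_smul_eq_mk_rep k v hv
  exact ⟨(c : k) ^ F.deg, by rw [← lift_smul, ← Units.smul_def, hc]⟩

lemma eval_bind₁_comp (F : RatMap k n m) (v : Fin (n + 1) → k)
    (f : MvPolynomial (Fin (m + 1)) k) : eval v (bind₁ F.comp f) = eval (F.lift v) f :=
  eval_bind₁ _ _ _

lemma app_mem_zeros_iff (F : RatMap k n m) {x : ProjSp k n} (hx : F.Defined x) {d : ℕ}
    {f : MvPolynomial (Fin (m + 1)) k} (hf : f.IsHomogeneous d) :
    F.app x ∈ zeros k f ↔ x ∈ zeros k (bind₁ F.comp f) := by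
  rw [F.app_of_defined hx, mk_mem_zeros_iff hf, zeros, Set.mem_ofPred_eq, eval_bind₁_comp]

/-- The rational map `G` undoes `F` at the point `x`, with both maps defined where evaluated. -/
def LeftInverseAt (G : RatMap k m n) (F : RatMap k n m) (x : ProjSp k n) : Prop :=
  F.Defined x ∧ G.Defined (F.app x) ∧ G.app (F.app x) = x

lemma leftInverseAt_mk_iff {G : RatMap k m n} {F : RatMap k n m} {v : Fin (n + 1) → k}
    (hv : v ≠ 0) :
    G.LeftInverseAt F (Projectivization.mk k v hv) ↔
      F.lift v ≠ 0 ∧ ∃ c : k, c ≠ 0 ∧ G.lift (F.lift v) = c • v := by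
  rw [LeftInverseAt, F.defined_mk_iff hv]
  refine and_congr_right fun hF => ?_
  rw [F.app_mk hv hF, G.defined_mk_iff hF]
  constructor
  · rintro ⟨hG, h⟩
    rw [G.app_mk hF hG, Projectivization.mk_eq_mk_iff'] at h
    obtain ⟨c, hc⟩ := h
    exact ⟨c, left_ne_zero_of_smul (hc ▸ hG), hc.symm⟩
  · rintro ⟨c, hc, h⟩
    have hG : G.lift (F.lift v) ≠ 0 := h ▸ smul_ne_zero hc hv
    exact ⟨hG, by rw [G.app_mk hF hG, Projectivization.mk_eq_mk_iff']; exact ⟨c, h.symm⟩⟩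

/-- One half of `IsBirationalOn`: off a hypersurface not containing `A`, the map `F` sends `A`
into `B` and is undone by `G`. -/
def GenericLeftInverse (G : RatMap k m n) (F : RatMap k n m) (A : Set (ProjSp k n))
    (B : Set (ProjSp k m)) : Prop :=
  ∃ (u : MvPolynomial (Fin (n + 1)) k) (d : ℕ), u.IsHomogeneous d ∧ ¬ A ⊆ zeros k u ∧
    ∀ x ∈ A \ zeros k u, F.app x ∈ B ∧ G.LeftInverseAt F x

end RatMap

lemma isBirationalOn_iff {F : RatMap k n m} {G : RatMap k m n} {A : Set (ProjSp k n)}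
    {B : Set (ProjSp k m)} :
    IsBirationalOn k F G A B ↔ G.GenericLeftInverse F A B ∧ F.GenericLeftInverse G B A := by
  constructor
  · rintro ⟨u, v, du, dv, hu, hv, hAu, hBv, hFG, hGF⟩
    exact ⟨⟨u, du, hu, hAu, fun x hx => ⟨(hFG x hx).2.1, (hFG x hx).1, (hFG x hx).2.2⟩⟩,
      ⟨v, dv, hv, hBv, fun y hy => ⟨(hGF y hy).2.1, (hGF y hy).1, (hGF y hy).2.2⟩⟩⟩
  · rintro ⟨⟨u, du, hu, hAu, hFG⟩, ⟨v, dv, hv, hBv, hGF⟩⟩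
    exact ⟨u, v, du, dv, hu, hv, hAu, hBv,
      fun x hx => ⟨(hFG x hx).2.1, (hFG x hx).1, (hFG x hx).2.2⟩,
      fun y hy => ⟨(hGF y hy).2.1, (hGF y hy).1, (hGF y hy).2.2⟩⟩

/-- The vector `(a, 1)`, representing a point outside the hyperplane `x_{m+1} = 0`. -/
def vertexVec (a : Fin (m + 1) → k) : Fin (m + 2) → k := Fin.snoc a 1

lemma vertexVec_apply_last (a : Fin (m + 1) → k) : vertexVec a (Fin.last _) = 1 := Fin.snoc_last _ _

lemma vertexVec_ne_zero (a : Fin (m + 1) → k) : vertexVec a ≠ 0 := fun h =>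
  one_ne_zero ((vertexVec_apply_last a).symm.trans (congrFun h (Fin.last _)))

/-- The point `[a : 1]` of projective space. -/
def vertex (a : Fin (m + 1) → k) : ProjSp k (m + 1) :=
  Projectivization.mk k (vertexVec a) (vertexVec_ne_zero a)

/-- The linear projection from `[a : 1]` onto the hyperplane `x_{m+1} = 0`. -/
def projFrom (a : Fin (m + 1) → k) : (Fin (m + 2) → k) →ₗ[k] (Fin (m + 1) → k) :=
  LinearMap.pi fun i => LinearMap.proj i.castSucc - a i • LinearMap.proj (Fin.last _)

lemma projFrom_apply (a : Fin (m + 1) → k) (z : Fin (m + 2) → k) (i : Fin (m + 1)) :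
    projFrom a z i = z i.castSucc - a i * z (Fin.last _) := rfl

lemma extendZeroLinear_apply_last (y : Fin (m + 1) → k) :
    extendZeroLinear k m y (Fin.last _) = 0 := by
  simp [extendZeroLinear]

@[simp]
lemma projFrom_vertexVec (a : Fin (m + 1) → k) : projFrom a (vertexVec a) = 0 := by
  ext i
  simp [projFrom_apply, vertexVec]

@[simp]
lemma projFrom_extendZeroLinear (a y : Fin (m + 1) → k) :
    projFrom a (extendZeroLinear k m y) = y := by
  ext i
  simp [projFrom_apply, extendZeroLinear]

lemma extendZeroLinear_projFrom_add (a : Fin (m + 1) → k) (z : Fin (m + 2) → k) :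
    extendZeroLinear k m (projFrom a z) + z (Fin.last _) • vertexVec a = z := by
  ext i
  refine Fin.lastCases ?_ (fun j => ?_) i <;>
    simp [projFrom_apply, extendZeroLinear, vertexVec, mul_comm]

lemma exists_eq_vertex {p : ProjSp k (m + 1)} (hp : p ∉ Set.range (hyperplaneEmbedding k m)) :
    ∃ a, p = vertex a := by
  induction p using Projectivization.ind with
  | h z hz =>
  have hdecomp := extendZeroLinear_projFrom_add 0 z
  have hlast : z (Fin.last _) ≠ 0 := by
    intro hlast
    rw [hlast, zero_smul, add_zero] at hdecomp
    have hy : projFrom 0 z ≠ 0 := fun hy => hz (by rw [← hdecomp, hy, map_zero])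
    refine hp ⟨Projectivization.mk k _ hy, ?_⟩
    simp only [hyperplaneEmbedding, Projectivization.map_mk, hdecomp]
  refine ⟨fun i => (z (Fin.last _))⁻¹ * z i.castSucc, ?_⟩
  refine (Projectivization.mk_eq_mk_iff' ..).2 ⟨z (Fin.last _), ?_⟩
  ext i
  refine Fin.lastCases ?_ (fun j => ?_) i <;> simp [vertexVec, hlast]

lemma submodule_hyperplaneEmbedding (c : ProjSp k m) :
    (hyperplaneEmbedding k m c).submodule = c.submodule.map (extendZeroLinear k m) := by
  induction c using Projectivization.ind with
  | h y hy =>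
  rw [hyperplaneEmbedding, Projectivization.map_mk, Projectivization.submodule_mk,
    Projectivization.submodule_mk, Submodule.map_span, Set.image_singleton]

lemma span_vertexVec_sup_map_extendZeroLinear (a : Fin (m + 1) → k)
    (W : Submodule k (Fin (m + 1) → k)) :
    (k ∙ vertexVec a) ⊔ W.map (extendZeroLinear k m) = W.comap (projFrom a) := by
  apply le_antisymm
  · refine sup_le ?_ (Submodule.map_le_iff_le_comap.2 fun y hy => ?_)
    · simp [Submodule.span_singleton_le_iff_mem]
    · simpa using hy
  · intro z hz
    rw [← extendZeroLinear_projFrom_add a z]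
    exact add_mem (Submodule.mem_sup_right (Submodule.mem_map_of_mem hz))
      (Submodule.mem_sup_left (Submodule.smul_mem _ _ (Submodule.mem_span_singleton_self _)))

lemma mk_mem_coneOver_iff {a : Fin (m + 1) → k} {A : Set (ProjSp k m)} {z : Fin (m + 2) → k}
    (hz : z ≠ 0) :
    Projectivization.mk k z hz ∈ coneOver k (vertex a) (hyperplaneEmbedding k m '' A) ↔
      ∃ c ∈ A, projFrom a z ∈ c.submodule := by
  simp only [coneOver, Set.biUnion_image, Set.mem_iUnion, exists_prop, lineThrough,
    Set.mem_ofPred_eq, vertex, Projectivization.submodule_mk, submodule_hyperplaneEmbedding,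
    span_vertexVec_sup_map_extendZeroLinear, Submodule.span_singleton_le_iff_mem,
    Submodule.mem_comap]

lemma mk_mem_coneOver_iff_of_projFrom_ne_zero {a : Fin (m + 1) → k} {A : Set (ProjSp k m)}
    {z : Fin (m + 2) → k} (hz : z ≠ 0) (hy : projFrom a z ≠ 0) :
    Projectivization.mk k z hz ∈ coneOver k (vertex a) (hyperplaneEmbedding k m '' A) ↔
      Projectivization.mk k (projFrom a z) hy ∈ A := by
  rw [mk_mem_coneOver_iff]
  constructor
  · rintro ⟨c, hc, hmem⟩
    rwa [mk_eq_of_mem_submodule hy hmem]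
  · exact fun h => ⟨_, h, by
      rw [Projectivization.submodule_mk]; exact Submodule.mem_span_singleton_self _⟩

lemma coneOver_univ (a : Fin (m + 1) → k) :
    coneOver k (vertex a) (hyperplaneEmbedding k m '' Set.univ) = Set.univ := by
  refine Set.eq_univ_of_forall fun x => ?_
  induction x using Projectivization.ind with
  | h z hz =>
  by_cases hy : projFrom a z = 0
  · rw [mk_mem_coneOver_iff]
    exact ⟨Classical.arbitrary _, trivial, by rw [hy]; exact zero_mem _⟩
  · exact (mk_mem_coneOver_iff_of_projFrom_ne_zero hz hy).2 trivial

lemma not_coneOver_subset_zeros_linearPullback (a : Fin (m + 1) → k) {A : Set (ProjSp k m)} {d : ℕ}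
    {u : MvPolynomial (Fin (m + 1)) k} (hu : u.IsHomogeneous d) (hAu : ¬ A ⊆ zeros k u) :
    ¬ coneOver k (vertex a) (hyperplaneEmbedding k m '' A) ⊆
      zeros k (linearPullback (projFrom a) u) := by
  obtain ⟨x, hx, hxu⟩ := Set.not_subset.1 hAu
  induction x using Projectivization.ind with
  | h y hy =>
  have hz : extendZeroLinear k m y ≠ 0 :=
    (map_ne_zero_iff _ (extendZeroLinear_injective k m)).2 hy
  refine Set.not_subset.2 ⟨Projectivization.mk k _ hz, ?_, ?_⟩
  · rw [mk_mem_coneOver_iff_of_projFrom_ne_zero hz (by simpa using hy)]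
    simpa using hx
  · rw [mk_mem_zeros_iff (isHomogeneous_linearPullback _ hu)]
    rw [mk_mem_zeros_iff hu] at hxu
    simpa [eval_linearPullback] using hxu

namespace RatMap

/-- The extension of `F` to the cones with vertices `[a : 1]` and `[b : 1]`: in the coordinates
`(y, t) = (projFrom a z, z_{n+1})` on the source and their analogues for `b` on the target it is
`(y, t) ↦ (φ(y) F(y), t ψ(F y))`. -/
noncomputable def cone (F : RatMap k n m) (φ : (Fin (n + 1) → k) →ₗ[k] k)
    (ψ : (Fin (m + 1) → k) →ₗ[k] k) (a : Fin (n + 1) → k) (b : Fin (m + 1) → k) :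
    RatMap k (n + 1) (m + 1) where
  deg := 1 + F.deg
  comp j :=
    Fin.snoc (α := fun _ => MvPolynomial (Fin (n + 2)) k)
        (fun i => linearPullback (projFrom a) (linearForm φ * F.comp i)) 0 j +
      C (vertexVec b j) *
        (X (Fin.last _) * linearPullback (projFrom a) (bind₁ F.comp (linearForm ψ)))
  homog j := by
    have hlast : (X (Fin.last (n + 1)) * linearPullback (projFrom a)
        (bind₁ F.comp (linearForm ψ))).IsHomogeneous (1 + F.deg) :=
      (isHomogeneous_X k _).mul (isHomogeneous_linearPullback _
        (by simpa using (isHomogeneous_linearForm ψ).aeval F.comp F.homog))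
    refine IsHomogeneous.add ?_ (hlast.C_mul _)
    refine Fin.lastCases ?_ (fun i => ?_) j
    · rw [Fin.snoc_last]
      exact isHomogeneous_zero ..
    · rw [Fin.snoc_castSucc]
      exact isHomogeneous_linearPullback _ ((isHomogeneous_linearForm φ).mul (F.homog i))

variable {F : RatMap k n m} {G : RatMap k m n} {φ : (Fin (n + 1) → k) →ₗ[k] k}
  {ψ : (Fin (m + 1) → k) →ₗ[k] k} {a : Fin (n + 1) → k} {b : Fin (m + 1) → k}

lemma lift_cone (z : Fin (n + 2) → k) :
    (F.cone φ ψ a b).lift z =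
      extendZeroLinear k m (φ (projFrom a z) • F.lift (projFrom a z)) +
        (z (Fin.last _) * ψ (F.lift (projFrom a z))) • vertexVec b := by
  ext j
  refine Fin.lastCases ?_ (fun i => ?_) j <;>
    simp [lift, cone, extendZeroLinear, eval_linearPullback, eval_linearForm, eval_bind₁_comp,
      mul_comm]

lemma projFrom_lift_cone (z : Fin (n + 2) → k) :
    projFrom b ((F.cone φ ψ a b).lift z) = φ (projFrom a z) • F.lift (projFrom a z) := by
  rw [lift_cone, map_add, projFrom_extendZeroLinear, map_smul, projFrom_vertexVec, smul_zero,
    add_zero]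

lemma lift_cone_apply_last (z : Fin (n + 2) → k) :
    (F.cone φ ψ a b).lift z (Fin.last _) = z (Fin.last _) * ψ (F.lift (projFrom a z)) := by
  simp [lift_cone, extendZeroLinear_apply_last, vertexVec_apply_last]

lemma lift_cone_lift_cone {z : Fin (n + 2) → k} {c : k}
    (h : G.lift (F.lift (projFrom a z)) = c • projFrom a z) :
    (G.cone ψ φ b a).lift ((F.cone φ ψ a b).lift z) =
      (φ (projFrom a z) ^ (G.deg + 1) * ψ (F.lift (projFrom a z)) * c) • z := by
  conv_rhs =>
    enter [2]
    rw [← extendZeroLinear_projFrom_add a z]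
  rw [smul_add, ← map_smul, smul_smul, lift_cone, projFrom_lift_cone, lift_cone_apply_last,
    lift_smul, h]
  simp only [map_smul, smul_smul, smul_eq_mul]
  congr 2 <;> ring

lemma projFrom_lift_cone_ne_zero {z : Fin (n + 2) → k} (hφ : φ (projFrom a z) ≠ 0)
    (hF : F.lift (projFrom a z) ≠ 0) : projFrom b ((F.cone φ ψ a b).lift z) ≠ 0 := by
  rw [projFrom_lift_cone]
  exact smul_ne_zero hφ hF

lemma lift_cone_ne_zero {z : Fin (n + 2) → k} (hφ : φ (projFrom a z) ≠ 0)
    (hF : F.lift (projFrom a z) ≠ 0) : (F.cone φ ψ a b).lift z ≠ 0 := fun h =>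
  projFrom_lift_cone_ne_zero (ψ := ψ) (b := b) hφ hF (by rw [h, map_zero])

lemma app_cone_mem_coneOver {B : Set (ProjSp k m)} {z : Fin (n + 2) → k} (hz : z ≠ 0)
    (hy : projFrom a z ≠ 0) (hφ : φ (projFrom a z) ≠ 0) (hF : F.lift (projFrom a z) ≠ 0)
    (hB : F.app (Projectivization.mk k _ hy) ∈ B) :
    (F.cone φ ψ a b).app (Projectivization.mk k z hz) ∈
      coneOver k (vertex b) (hyperplaneEmbedding k m '' B) := by
  rw [app_mk _ hz (lift_cone_ne_zero hφ hF),
    mk_mem_coneOver_iff_of_projFrom_ne_zero _ (projFrom_lift_cone_ne_zero hφ hF)]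
  convert hB using 1
  rw [app_mk _ hy hF, Projectivization.mk_eq_mk_iff']
  exact ⟨φ (projFrom a z), projFrom_lift_cone z |>.symm⟩

lemma LeftInverseAt.cone {z : Fin (n + 2) → k} (hz : z ≠ 0) (hy : projFrom a z ≠ 0)
    (hφ : φ (projFrom a z) ≠ 0) (hψ : ψ (F.lift (projFrom a z)) ≠ 0)
    (h : G.LeftInverseAt F (Projectivization.mk k _ hy)) :
    (G.cone ψ φ b a).LeftInverseAt (F.cone φ ψ a b) (Projectivization.mk k z hz) := by
  obtain ⟨hF, c, hc, hGF⟩ := (leftInverseAt_mk_iff hy).1 h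
  exact (leftInverseAt_mk_iff hz).2 ⟨lift_cone_ne_zero hφ hF, _,
    mul_ne_zero (mul_ne_zero (pow_ne_zero _ hφ) hψ) hc, lift_cone_lift_cone hGF⟩

lemma GenericLeftInverse.exists_forall_cone {A : Set (ProjSp k n)} {B : Set (ProjSp k m)}
    (h : G.GenericLeftInverse F A B) (a : Fin (n + 1) → k) (b : Fin (m + 1) → k) :
    ∃ (x : ProjSp k n) (y : ProjSp k m), ∀ φ ψ,
      x ∉ zeros k (linearForm φ) → y ∉ zeros k (linearForm ψ) →
        (G.cone ψ φ b a).GenericLeftInverse (F.cone φ ψ a b)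
          (coneOver k (vertex a) (hyperplaneEmbedding k n '' A))
          (coneOver k (vertex b) (hyperplaneEmbedding k m '' B)) := by
  obtain ⟨u, d, hu, hAu, hinv⟩ := h
  obtain ⟨x, hxA, hxu⟩ := Set.not_subset.1 hAu
  refine ⟨x, F.app x, fun φ ψ hφ hψ => ?_⟩
  rw [app_mem_zeros_iff F (hinv x ⟨hxA, hxu⟩).2.1 (isHomogeneous_linearForm ψ)] at hψ
  set w := u * (linearForm φ * bind₁ F.comp (linearForm ψ)) 
  have hwhom : w.IsHomogeneous (d + (1 + F.deg * 1)) :=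
    hu.mul ((isHomogeneous_linearForm φ).mul ((isHomogeneous_linearForm ψ).aeval F.comp F.homog))
  have hAw : ¬ A ⊆ zeros k w := Set.not_subset.2 ⟨x, hxA, by simpa [w, zeros] using ⟨hxu, hφ, hψ⟩⟩
  refine ⟨linearPullback (projFrom a) w, _, isHomogeneous_linearPullback _ hwhom,
    not_coneOver_subset_zeros_linearPullback a hwhom hAw, fun p hp => ?_⟩
  induction p using Projectivization.ind with
  | h z hz =>
  obtain ⟨hzA, hzw⟩ := hp
  rw [mk_mem_zeros_iff (isHomogeneous_linearPullback _ hwhom)] at hzw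
  simp only [w, eval_linearPullback, map_mul, eval_linearForm, eval_bind₁_comp, mul_eq_zero,
    not_or] at hzw
  obtain ⟨hyu, hyφ, hyψ⟩ := hzw
  have hy : projFrom a z ≠ 0 := fun hy => hyφ (by rw [hy, map_zero])
  obtain ⟨hB, hGF⟩ := hinv (Projectivization.mk k _ hy)
    ⟨(mk_mem_coneOver_iff_of_projFrom_ne_zero hz hy).1 hzA, by rwa [mk_mem_zeros_iff hu]⟩
  exact ⟨app_cone_mem_coneOver hz hy hyφ ((F.defined_mk_iff hy).1 hGF.1) hB,
    hGF.cone hz hy hyφ hyψ⟩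

end RatMap

lemma IsBirationalOn.exists_finite_forall_cone {F : RatMap k n m} {G : RatMap k m n}
    {A : Set (ProjSp k n)} {B : Set (ProjSp k m)} (h : IsBirationalOn k F G A B)
    (a : Fin (n + 1) → k) (b : Fin (m + 1) → k) :
    ∃ (V : Set (ProjSp k n)) (W : Set (ProjSp k m)), V.Finite ∧ W.Finite ∧ ∀ φ ψ,
      Disjoint V (zeros k (linearForm φ)) → Disjoint W (zeros k (linearForm ψ)) →
        IsBirationalOn k (F.cone φ ψ a b) (G.cone ψ φ b a)
          (coneOver k (vertex a) (hyperplaneEmbedding k n '' A))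
          (coneOver k (vertex b) (hyperplaneEmbedding k m '' B)) := by
  obtain ⟨hFG, hGF⟩ := isBirationalOn_iff.1 h
  obtain ⟨x, y, hxy⟩ := hFG.exists_forall_cone a b
  obtain ⟨y', x', hyx⟩ := hGF.exists_forall_cone b a
  refine ⟨{x, x'}, {y, y'}, Set.toFinite _, Set.toFinite _, fun φ ψ hφ hψ => ?_⟩
  simp only [Set.disjoint_insert_left, Set.disjoint_singleton_left] at hφ hψ
  exact isBirationalOn_iff.2 ⟨hxy φ ψ hφ.1 hψ.1, hyx ψ φ hψ.2 hφ.2⟩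

end ProjSp

theorem cones_over_cremonaEquivalent_divisors_are_cremonaEquivalent_general
    (k : Type) [Field k] [Infinite k] (m : ℕ) (C₁ C₂ : Set (ProjSp k m))
    (hcrem : CremonaEquivalent k C₁ C₂) (p₁ p₂ : ProjSp k (m + 1))
    (hp₁ : p₁ ∉ Set.range (hyperplaneEmbedding k m))
    (hp₂ : p₂ ∉ Set.range (hyperplaneEmbedding k m)) :
    CremonaEquivalent k (coneOver k p₁ (hyperplaneEmbedding k m '' C₁))
      (coneOver k p₂ (hyperplaneEmbedding k m '' C₂)) := by
  obtain ⟨a, rfl⟩ := exists_eq_vertex hp₁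
  obtain ⟨b, rfl⟩ := exists_eq_vertex hp₂
  obtain ⟨F, G, huniv, hC⟩ := hcrem
  obtain ⟨V, W, hV, hW, hconeUniv⟩ := huniv.exists_finite_forall_cone a b
  obtain ⟨V', W', hV', hW', hconeC⟩ := hC.exists_finite_forall_cone a b
  obtain ⟨φ, hφ⟩ := exists_linearForm_disjoint_zeros (hV.union hV')
  obtain ⟨ψ, hψ⟩ := exists_linearForm_disjoint_zeros (hW.union hW')
  rw [Set.disjoint_union_left] at hφ hψ
  have huniv' := hconeUniv φ ψ hφ.1 hψ.1
  rw [coneOver_univ, coneOver_univ] at huniv'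
  exact ⟨F.cone φ ψ a b, G.cone ψ φ b a, huniv', hconeC φ ψ hφ.2 hψ.2⟩

/-- Proposition `pro:easy` of the paper.
Let `C₁` and `C₂` be irreducible reduced divisors in `ℙᵐ` (`= ℙ^{n-1}`) that are
Cremona equivalent, embed `ℙᵐ` as a hyperplane of `ℙ^{m+1}` (`= ℙⁿ`), and let
`Sᵢ ⊆ ℙ^{m+1}` be the cone over (the image of) `Cᵢ` with a vertex `pᵢ` outside this
hyperplane.  Then `S₁` is Cremona equivalent to `S₂`. -/
theorem cones_over_cremonaEquivalent_divisors_are_cremonaEquivalent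
    (k : Type) [Field k] [IsAlgClosed k] [CharZero k] (m : ℕ)
    (C₁ C₂ : Set (ProjSp k m))
    (hC₁ : IsIrredDivisor k C₁) (hC₂ : IsIrredDivisor k C₂)
    (hcrem : CremonaEquivalent k C₁ C₂)
    (p₁ p₂ : ProjSp k (m + 1))
    (hp₁ : p₁ ∉ Set.range (hyperplaneEmbedding k m))
    (hp₂ : p₂ ∉ Set.range (hyperplaneEmbedding k m))
    (S₁ S₂ : Set (ProjSp k (m + 1)))
    (hS₁ : S₁ = coneOver k p₁ (hyperplaneEmbedding k m '' C₁))
    (hS₂ : S₂ = coneOver k p₂ (hyperplaneEmbedding k m '' C₂)) :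
    CremonaEquivalent k S₁ S₂ := by
  subst hS₁ hS₂
  exact cones_over_cremonaEquivalent_divisors_are_cremonaEquivalent_general
    k m C₁ C₂ hcrem p₁ p₂ hp₁ hp₂
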